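/- The root lattice E₈ has a Hermitian structure over O_L admitting an automorphism of order 5; that is, there exist a finitely generated O_L-module Λ_h with a positive definite L-Hermitian form h and an O_L-linear isometry of Λ_h of order 5, such that the ℤ-bilinear form Tr_{L/ℚ}(h(x,y)) makes Λ_h a positive definite even unimodular ℤ-lattice of rank 8 (necessarily isometric to E₈). -/

import Mathlib

open NumberField

/-!
The icosian ring `𝓘`, a maximal order in the Hamilton quaternions over `ℚ(√5)`, becomes the
lattice `E₈` under the rational part of the pairing `2 Re (x ȳ)`: in suitable coordinates it is
Construction A of the extended Hamming code. Left multiplication by a unit of order `5` is an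
isometry commuting with all right multiplications, so it suffices to embed `𝓞 L` in `𝓘` with
complex conjugation going to quaternion conjugation, and to lift the pairing along `Tr_{L/ℚ}`.
Such an embedding of `L` in the quaternions amounts to a pure quaternion of norm `ℓ`, which a
rational representation by `x² + 2y² + 10z²` provides up to powers of `√5`. As the covering
radius of the Hamming code makes `𝓘` norm-Euclidean, hence a left principal ideal ring, a conjugate
of the embedding maps `𝓞 L` into `𝓘`.
-/

section RationalRepresentation

theorem sq_sub_le_of_le_sqrt {n u v : ℕ} (hu : u ≤ n.sqrt) (hv : v ≤ n.sqrt) :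
    ((u : ℤ) - v) ^ 2 ≤ n := by
  have hdist : |(u : ℤ) - v| ≤ n.sqrt := by rw [abs_le]; omega
  calc ((u : ℤ) - v) ^ 2 = |(u : ℤ) - v| ^ 2 := (sq_abs _).symm
    _ ≤ (n.sqrt : ℤ) ^ 2 := by gcongr
    _ ≤ n := mod_cast n.sqrt_le'

theorem mul_lt_sqrt_succ_mul {a b : ℕ} (ha : 0 < a) (hb : 0 < b) :
    b * a < ((a * b).sqrt + 1) * ((b.sqrt + 1) * (a.sqrt + 1)) := by
  refine lt_of_pow_lt_pow_left₀ 2 (Nat.zero_le _) ?_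
  calc (b * a) ^ 2 = (a * b) * (b * a) := by ring
    _ < ((a * b).sqrt + 1) ^ 2 * ((b.sqrt + 1) ^ 2 * (a.sqrt + 1) ^ 2) := by
        gcongr <;> exact Nat.lt_succ_sqrt' _
    _ = _ := by ring

theorem exists_ne_zero_dvd_sub_sq_le {a b : ℕ} (ha : 0 < a) (hb : 0 < b) (r s : ℤ) :
    ∃ x w t : ℤ, (x, w, t) ≠ 0 ∧ (b : ℤ) ∣ x - s * w ∧ (a : ℤ) ∣ x - r * t ∧
      x ^ 2 ≤ a * b ∧ w ^ 2 ≤ b ∧ t ^ 2 ≤ a := by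
  have : NeZero a := ⟨ha.ne'⟩
  have : NeZero b := ⟨hb.ne'⟩
  let box : Finset (ℕ × ℕ × ℕ) := Finset.range ((a * b).sqrt + 1) ×ˢ
    (Finset.range (b.sqrt + 1) ×ˢ Finset.range (a.sqrt + 1))
  let residues : ℕ × ℕ × ℕ → ZMod b × ZMod a := fun p ↦
    ((p.1 - s * p.2.1 : ℤ), (p.1 - r * p.2.2 : ℤ))
  have hcard : (Finset.univ : Finset (ZMod b × ZMod a)).card < box.card := by
    simpa [box, ZMod.card] using mul_lt_sqrt_succ_mul ha hb
  obtain ⟨⟨x, w, t⟩, hp, ⟨x', w', t'⟩, hp', hne, heq⟩ :=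
    Finset.exists_ne_map_eq_of_card_lt_of_maps_to hcard (f := residues)
      (fun _ _ ↦ Finset.mem_univ _)
  simp only [box, Finset.mem_product, Finset.mem_range, Nat.lt_succ_iff] at hp hp'
  simp only [residues, Prod.mk.injEq, ZMod.intCast_eq_intCast_iff_dvd_sub] at heq
  refine ⟨x' - x, w' - w, t' - t, fun h ↦ hne ?_, ?_, ?_, ?_,
    sq_sub_le_of_le_sqrt hp'.2.1 hp.2.1, sq_sub_le_of_le_sqrt hp'.2.2 hp.2.2⟩
  · simp only [Prod.mk_eq_zero, sub_eq_zero, Nat.cast_inj] at h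
    simp only [h]
  · convert heq.1 using 1; ring
  · convert heq.2 using 1; ring
  · exact_mod_cast sq_sub_le_of_le_sqrt hp'.1 hp.1

theorem int_sq_ne_mul_of_not_dvd {a b : ℕ} (ha : a.Prime) (hab : ¬ a ∣ b) (y : ℤ) :
    y ^ 2 ≠ a * b := by
  intro hy
  obtain ⟨c, rfl⟩ : (a : ℤ) ∣ y :=
    (Nat.prime_iff_prime_int.1 ha).dvd_of_dvd_pow (n := 2) (hy ▸ dvd_mul_right _ _)
  have hb : (a : ℤ) * c ^ 2 = b :=
    mul_left_cancel₀ (Nat.cast_ne_zero.2 ha.ne_zero) (by linear_combination hy)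
  exact hab (Int.natCast_dvd_natCast.1 ⟨_, hb.symm⟩)

theorem exists_int_dvd_sq_sub_of_isSquare {n : ℕ} {c : ℤ} (h : IsSquare (c : ZMod n)) :
    ∃ s : ℤ, (n : ℤ) ∣ s ^ 2 - c := by
  obtain ⟨y, hy⟩ := h
  obtain ⟨s, rfl⟩ := ZMod.intCast_surjective y
  refine ⟨s, ?_⟩
  rw [← ZMod.intCast_zmod_eq_zero_iff_dvd]
  push_cast
  rw [hy]; ring

/-- The value of `x² + a w² - b t²` found here is divisible by `a * b` and lies strictly between
`-a * b` and `2 * a * b`. -/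
theorem exists_sq_add_mul_sq_eq_mul {a b : ℕ} (ha : a.Prime) (hb : 0 < b)
    (hab : ¬ a ∣ b) (hneg : IsSquare (-a : ZMod b)) (hpos : IsSquare (b : ZMod a)) :
    ∃ x w t : ℤ, (x, w, t) ≠ 0 ∧
      (x ^ 2 + a * w ^ 2 = b * t ^ 2 ∨ x ^ 2 + a * w ^ 2 = b * (t ^ 2 + a)) := by
  obtain ⟨s, hs⟩ := exists_int_dvd_sq_sub_of_isSquare (n := b) (c := -a) (by simpa using hneg)
  obtain ⟨r, hr⟩ := exists_int_dvd_sq_sub_of_isSquare (n := a) (c := b) (by simpa using hpos)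
  obtain ⟨x, w, t, hne, hxw, hxt, hx, hw, ht⟩ := exists_ne_zero_dvd_sub_sq_le ha.pos hb r s
  have hb_dvd : (b : ℤ) ∣ x ^ 2 + a * w ^ 2 - b * t ^ 2 := by
    rw [show x ^ 2 + a * w ^ 2 - b * t ^ 2 =
      (x - s * w) * (x + s * w) + (s ^ 2 - -a) * w ^ 2 - b * t ^ 2 by ring]
    exact ((hxw.mul_right _).add (hs.mul_right _)).sub (dvd_mul_right _ _)
  have ha_dvd : (a : ℤ) ∣ x ^ 2 + a * w ^ 2 - b * t ^ 2 := by
    rw [show x ^ 2 + a * w ^ 2 - b * t ^ 2 =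
      (x - r * t) * (x + r * t) + (r ^ 2 - b) * t ^ 2 + a * w ^ 2 by ring]
    exact ((hxt.mul_right _).add (hr.mul_right _)).add (dvd_mul_right _ _)
  have hcop : IsCoprime (b : ℤ) a :=
    Nat.isCoprime_iff_coprime.2 ((Nat.Prime.coprime_iff_not_dvd ha).2 hab).symm
  obtain ⟨k, hk⟩ := hcop.mul_dvd hb_dvd ha_dvd
  have ha0 : (0 : ℤ) < a := mod_cast ha.pos
  have hb0 : (0 : ℤ) < b := mod_cast hb
  have hx' : x ^ 2 < a * b := lt_of_le_of_ne hx (int_sq_ne_mul_of_not_dvd ha hab x)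
  have ht' : t ^ 2 < a := lt_of_le_of_ne ht
    (by simpa using int_sq_ne_mul_of_not_dvd ha ha.not_dvd_one t)
  have hlt : k < 2 := by nlinarith [mul_nonneg hb0.le (sq_nonneg t)]
  have hgt : -1 < k := by nlinarith [mul_nonneg ha0.le (sq_nonneg w), sq_nonneg x]
  refine ⟨x, w, t, hne, ?_⟩
  obtain rfl | rfl : k = 0 ∨ k = 1 := by omega
  · exact .inl (by linear_combination hk)
  · exact .inr (by linear_combination hk)

theorem exists_rat_eq_sq_add_mul_sq {a b : ℕ} (ha : a.Prime) (hb : 0 < b)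
    (hab : ¬ a ∣ b) (hneg : IsSquare (-a : ZMod b)) (hpos : IsSquare (b : ZMod a)) :
    ∃ x w : ℚ, (b : ℚ) = x ^ 2 + a * w ^ 2 := by
  have ha0 : (0 : ℚ) < a := mod_cast ha.pos
  obtain ⟨x, w, t, hne, h | h⟩ := exists_sq_add_mul_sq_eq_mul ha hb hab hneg hpos
  all_goals replace h := congrArg (Int.cast : ℤ → ℚ) h; push_cast at h
  · have ht : (t : ℚ) ≠ 0 := by
      intro ht
      rw [ht, zero_pow two_ne_zero, mul_zero, add_eq_zero_iff_of_nonneg (by positivity)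
        (by positivity)] at h
      simp_all [ha.ne_zero]
    exact ⟨x / t, w / t, by field_simp; linear_combination -h⟩
  · have hden : (t : ℚ) ^ 2 + a ≠ 0 := by positivity
    -- Brahmagupta's identity for the product with `t ^ 2 + a`.
    exact ⟨(x * t - a * w) / (t ^ 2 + a), (x + t * w) / (t ^ 2 + a), by
      field_simp; linear_combination -(t ^ 2 + (a : ℚ)) * h⟩

theorem exists_prime_four_mul_dvd_succ_and_mod_five {m : ℕ} (hm : 0 < m) (h5 : ¬ 5 ∣ m) :
    ∃ q : ℕ, q.Prime ∧ 4 * m ∣ q + 1 ∧ q % 5 = 2 := by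
  have hcop : Nat.Coprime (4 * m) 5 :=
    ((Nat.Prime.coprime_iff_not_dvd Nat.prime_five).2 (by omega)).symm
  obtain ⟨c, hcm, hc5⟩ := Nat.chineseRemainder hcop (4 * m - 1) 2
  have hc : Nat.Coprime c (4 * m * 5) := by
    refine Nat.Coprime.mul_right ?_ ?_
    · rw [Nat.Coprime, hcm.gcd_eq, ← Nat.Coprime]
      exact (Nat.coprime_self_sub_left (by omega)).2 (Nat.coprime_one_left _)
    · rw [Nat.Coprime, hc5.gcd_eq]; rfl
  obtain ⟨q, -, hq, hqc⟩ := Nat.forall_exists_prime_gt_and_modEq 0 (by omega) hc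
  refine ⟨q, hq, ?_, (hqc.of_mul_left _).trans hc5⟩
  have hmod := ((hqc.of_mul_right _).trans hcm).add_right 1
  rw [Nat.sub_add_cancel (by omega)] at hmod
  exact (hmod.dvd_iff dvd_rfl).2 dvd_rfl

theorem isSquare_of_jacobiSym_eq_one {q : ℕ} [Fact q.Prime] {a : ℤ} (h : jacobiSym a q = 1) :
    IsSquare (a : ZMod q) := by
  rw [← jacobiSym.legendreSym.to_jacobiSym] at h
  refine (legendreSym.eq_one_iff q fun h0 ↦ ?_).1 h
  rw [(legendreSym.eq_zero_iff q a).2 h0] at h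
  exact zero_ne_one h

theorem isSquare_natCast_of_four_mul_dvd_succ {m q : ℕ} [hq : Fact q.Prime]
    (h : 4 * m ∣ q + 1) : IsSquare (m : ZMod q) := by
  obtain ⟨k, hk⟩ := h
  have hm : 0 < m := Nat.pos_of_ne_zero (by rintro rfl; omega)
  have hodd : Odd q := by
    rw [← Nat.not_even_iff_odd, even_iff_two_dvd]; intro
    have : 2 ∣ q + 1 := ⟨2 * m * k, by rw [hk]; ring⟩
    omega
  have hmod : q % (4 * m) = 4 * m - 1 := by
    obtain ⟨j, rfl⟩ : ∃ j, k = j + 1 := Nat.exists_eq_succ_of_ne_zero (by rintro rfl; omega)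
    have : q = 4 * m - 1 + 4 * m * j := by rw [mul_add] at hk; omega
    rw [this, Nat.add_mul_mod_self_left, Nat.mod_eq_of_lt (by omega)]
  have hfour : jacobiSym (4 * m : ℤ) (4 * m - 1) = 1 := by
    have : (4 * m : ℤ) = 1 + ((4 * m - 1 : ℕ) : ℤ) := by omega
    rw [jacobiSym.mod_left, this, Int.add_emod_right, ← jacobiSym.mod_left, jacobiSym.one_left]
  have hgcd : Int.gcd 2 (4 * m - 1 : ℕ) = 1 :=
    (Nat.coprime_two_left (n := 4 * m - 1)).2 (by rw [Nat.odd_iff]; omega)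
  rw [show (4 : ℤ) = 2 ^ 2 by norm_num, jacobiSym.mul_left, jacobiSym.sq_one' hgcd,
    one_mul] at hfour
  have := isSquare_of_jacobiSym_eq_one (q := q) (a := m) <| by
    rw [jacobiSym.mod_right _ hodd, Int.natAbs_natCast, hmod, hfour]
  exact_mod_cast this

theorem isSquare_neg_five_zmod {q : ℕ} [Fact q.Prime] (h4 : q % 4 = 3) (h5 : q % 5 = 2) :
    IsSquare (-5 : ZMod q) := by
  have hodd : Odd q := by rw [Nat.odd_iff]; omega
  have hq5 : (q : ℤ) % (5 : ℕ) = 2 := by omega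
  have := isSquare_of_jacobiSym_eq_one (q := q) (a := -1 * (5 : ℕ)) <| by
    rw [jacobiSym.mul_left, jacobiSym.at_neg_one hodd,
      jacobiSym.quadratic_reciprocity_one_mod_four (by norm_num) hodd,
      ZMod.χ₄_nat_three_mod_four h4, jacobiSym.mod_left, hq5]
    norm_num
  simpa using this

theorem isSquare_intCast_zmod_mul {m n : ℕ} (h : m.Coprime n) {c : ℤ}
    (hm : IsSquare (c : ZMod m)) (hn : IsSquare (c : ZMod n)) :
    IsSquare (c : ZMod (m * n)) := by
  rw [← map_intCast (ZMod.chineseRemainder h).symm]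
  obtain ⟨x, hx⟩ := hm
  obtain ⟨y, hy⟩ := hn
  exact IsSquare.map _ ⟨(x, y), Prod.ext hx hy⟩

theorem exists_rat_eq_sq_add_two_mul_sq_add_ten_mul_sq {m : ℕ} (hm : 0 < m) (h5 : ¬ 5 ∣ m) :
    ∃ x y z : ℚ, (m : ℚ) = x ^ 2 + 2 * y ^ 2 + 10 * z ^ 2 := by
  obtain ⟨q, hq, hqm, hq5⟩ := exists_prime_four_mul_dvd_succ_and_mod_five hm h5
  have : Fact q.Prime := ⟨hq⟩
  have hq4 : q % 4 = 3 := by have := (dvd_mul_right 4 m).trans hqm; omega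
  have hqm' : ¬ q ∣ m := fun h ↦ by
    have := Nat.le_of_dvd hm h
    have := Nat.le_of_dvd q.succ_pos hqm
    omega
  have hneg_q : IsSquare (-q : ZMod m) := by
    have : ((q + 1 : ℕ) : ZMod m) = 0 :=
      (ZMod.natCast_eq_zero_iff _ _).2 ((dvd_mul_left m 4).trans hqm)
    push_cast at this
    exact ⟨1, by linear_combination -this⟩
  have hneg_five : IsSquare (-(5 : ℕ) : ZMod (2 * q)) := by
    have hcop : Nat.Coprime 2 q := Nat.coprime_two_left.2 (by rw [Nat.odd_iff]; omega)
    have := isSquare_intCast_zmod_mul (c := -5) hcop (by decide)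
      (by simpa using isSquare_neg_five_zmod hq4 hq5)
    simpa using this
  have htwo_q : IsSquare ((2 * q : ℕ) : ZMod 5) :=
    ⟨2, by rw [← ZMod.natCast_mod, show 2 * q % 5 = 4 by omega]; rfl⟩
  obtain ⟨x, w, hxw⟩ := exists_rat_eq_sq_add_mul_sq hq hm hqm' hneg_q
    (isSquare_natCast_of_four_mul_dvd_succ hqm)
  obtain ⟨y, z, hyz⟩ := exists_rat_eq_sq_add_mul_sq Nat.prime_five
    (b := 2 * q) (by have := hq.pos; omega) (by omega) hneg_five htwo_q
  push_cast at hyz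
  exact ⟨x, w * y / 2, w * z / 2, by linear_combination hxw + w ^ 2 / 2 * hyz⟩

end RationalRepresentation

section PrincipalIdeals

theorem isPrincipalIdealRing_of_exists_lt {R : Type*} [Ring R] (N : R → ℕ)
    (hN : ∀ a b : R, b ≠ 0 → ∃ q, N (a - q * b) < N b) : IsPrincipalIdealRing R := by
  refine ⟨fun I ↦ ?_⟩
  by_cases hI : I = ⊥
  · exact hI ▸ bot_isPrincipal
  obtain ⟨b, ⟨hbI, hb0⟩, hmin⟩ := WellFounded.has_min (measure N).wf {b | b ∈ I ∧ b ≠ 0}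
    (I.ne_bot_iff.1 hI)
  refine ⟨b, le_antisymm (fun a ha ↦ ?_) ((Ideal.span_singleton_le_iff_mem I).2 hbI)⟩
  obtain ⟨q, hq⟩ := hN a b hb0
  have hrem : a - q * b = 0 := by
    by_contra h
    exact hmin _ ⟨I.sub_mem ha (I.mul_mem_left q hbI), h⟩ hq
  exact Submodule.mem_span_singleton.2 ⟨q, (sub_eq_zero.1 hrem).symm⟩

/-- A generator `x` of the left ideal `{x | x * f a ∈ R for all a}` conjugates `f` into `R`,
because that ideal is stable under right multiplication by the image of `f`. -/
theorem exists_unit_conj_mem {A O : Type*} [Ring A] [Ring O] {R : Subring A}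
    [IsPrincipalIdealRing R] (hunit : ∀ x ∈ R, x ≠ 0 → IsUnit x) (f : O →+* A) {d : A}
    (hd : d ≠ 0) (hdf : ∀ a, d * f a ∈ R) : ∃ u : Aˣ, ∀ a, ↑u * f a * ↑u⁻¹ ∈ R := by
  let J : Ideal R :=
    { carrier := {x | ∀ a, x * f a ∈ R}
      add_mem' := fun hx hy a ↦ by simpa [add_mul] using R.add_mem (hx a) (hy a)
      zero_mem' := fun a ↦ by simp
      smul_mem' := fun g x hx a ↦ by simpa [mul_assoc] using R.mul_mem g.2 (hx a) }
  obtain ⟨x, hJ⟩ := IsPrincipalIdealRing.principal J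
  have hxJ : x ∈ J := hJ ▸ Submodule.mem_span_singleton_self x
  have hx0 : (x : A) ≠ 0 := by
    intro hx
    have hdJ : (⟨d, by simpa using hdf 1⟩ : R) ∈ J := hdf
    obtain ⟨g, hg⟩ := Submodule.mem_span_singleton.1 (hJ ▸ hdJ)
    exact hd (by simpa [hx] using (congrArg Subtype.val hg).symm)
  obtain ⟨u, hu⟩ := hunit x x.2 hx0
  refine ⟨u, fun a ↦ ?_⟩
  have hxa : (⟨x * f a, hxJ a⟩ : R) ∈ J := fun b ↦ by
    simpa [mul_assoc] using hxJ (a * b)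
  obtain ⟨g, hg⟩ := Submodule.mem_span_singleton.1 (hJ ▸ hxa)
  have hgx : (g : A) * x = x * f a := congrArg Subtype.val hg
  rw [hu, ← hgx, ← hu, Units.mul_inv_cancel_right]
  exact g.2

end PrincipalIdeals

section Lattices

variable {R K V W : Type*} [CommRing R] [Field K] [Algebra R K]
  [AddCommGroup V] [Module R V] [Module K V] [IsScalarTower R K V]
  [AddCommGroup W] [Module R W] [Module K W] [IsScalarTower R K W]

theorem isLattice_comap (e : V ≃ₗ[K] W) (M : Submodule R W) [M.IsLattice K] :
    (M.comap (e.restrictScalars R).toLinearMap).IsLattice K := by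
  have hmap : M.comap (e.restrictScalars R).toLinearMap =
      M.map (e.symm.restrictScalars R).toLinearMap :=
    Submodule.comap_equiv_eq_map_symm (e.restrictScalars R) M
  refine hmap ▸ ⟨(Submodule.IsLattice.fg (A := K)).map _, ?_⟩
  change Submodule.span K (e.symm.toLinearMap '' M) = ⊤
  rw [Submodule.span_image, Submodule.IsLattice.span_eq_top, Submodule.map_top,
    LinearEquiv.range]

variable [IsDomain R] [IsFractionRing R K] {M : Submodule R V}

theorem exists_ne_zero_smul_mem_of_mem_span {v : V} (hv : v ∈ Submodule.span K (M : Set V)) :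
    ∃ r : R, r ≠ 0 ∧ r • v ∈ M := by
  induction hv using Submodule.span_induction with
  | mem x hx => exact ⟨1, one_ne_zero, by rwa [one_smul]⟩
  | zero => exact ⟨1, one_ne_zero, by simp⟩
  | add x y _ _ hx hy =>
    obtain ⟨r, hr, hrx⟩ := hx
    obtain ⟨s, hs, hsy⟩ := hy
    refine ⟨r * s, mul_ne_zero hr hs, ?_⟩
    rw [smul_add, mul_smul, mul_smul, smul_comm r s x]
    exact M.add_mem (M.smul_mem s hrx) (M.smul_mem r hsy)
  | smul c x _ hx =>
    obtain ⟨r, hr, hrx⟩ := hx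
    obtain ⟨s, a, ha⟩ := IsLocalization.exists_integer_multiple (nonZeroDivisors R) c
    refine ⟨s * r, mul_ne_zero (nonZeroDivisors.coe_ne_zero s) hr, ?_⟩
    have hcx : ((s : R) * r) • c • x = a • r • x := by
      rw [mul_smul, smul_comm r c x, ← smul_assoc, ← ha, algebraMap_smul]
    exact hcx ▸ M.smul_mem a hrx

theorem exists_ne_zero_forall_smul_mem (hM : Submodule.span K (M : Set V) = ⊤)
    {N : Submodule R V} (hN : N.FG) : ∃ r : R, r ≠ 0 ∧ ∀ x ∈ N, r • x ∈ M := by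
  obtain ⟨s, rfl⟩ := hN
  choose r hr hrM using fun v ↦
    exists_ne_zero_smul_mem_of_mem_span (hM ▸ Submodule.mem_top (x := v))
  refine ⟨∏ x ∈ s, r x, Finset.prod_ne_zero_iff.2 fun x _ ↦ hr x, fun x hx ↦ ?_⟩
  suffices hle : Submodule.span R (s : Set V) ≤ M.comap (LinearMap.lsmul R V (∏ x ∈ s, r x)) from
    hle hx
  refine Submodule.span_le.2 fun y hy ↦ ?_
  obtain ⟨c, hc⟩ := Finset.dvd_prod_of_mem r hy
  change (∏ x ∈ s, r x) • y ∈ M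
  rw [hc, mul_comm, mul_smul]
  exact M.smul_mem c (hrM y)

end Lattices

section QuadraticExtension

variable {K L : Type*} [Field K] [Field L] [Algebra K L] {c : K} {α : L}

theorem exists_algEquiv_quadraticAlgebra [hc : Fact (∀ r : K, r ^ 2 ≠ c + 0 * r)]
    (hdim : Module.finrank K L = 2) (hα : α ^ 2 = algebraMap K L c) :
    ∃ e : QuadraticAlgebra K c 0 ≃ₐ[K] L, e (QuadraticAlgebra.omega) = α := by
  let φ : QuadraticAlgebra K c 0 →ₐ[K] L := QuadraticAlgebra.lift
    ⟨α, by rw [← pow_two, hα, zero_smul, add_zero, Algebra.algebraMap_eq_smul_one]⟩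
  have : FiniteDimensional K L := FiniteDimensional.of_finrank_pos (by omega)
  have hinj : Function.Injective φ := φ.toRingHom.injective
  have hsurj : Function.Surjective φ :=
    (LinearMap.injective_iff_surjective_of_finrank_eq_finrank (f := φ.toLinearMap)
      ((QuadraticAlgebra.finrank_eq_two c 0).trans hdim.symm)).1 hinj
  have hφ : φ QuadraticAlgebra.omega = α := by simp [φ]
  exact ⟨AlgEquiv.ofBijective φ ⟨hinj, hsurj⟩, hφ⟩

theorem exists_eq_algebraMap_add_smul (hc : ∀ r : K, r ^ 2 ≠ c)
    (hdim : Module.finrank K L = 2) (hα : α ^ 2 = algebraMap K L c) (z : L) :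
    ∃ p q : K, z = algebraMap K L p + q • α := by
  have : Fact (∀ r : K, r ^ 2 ≠ c + 0 * r) := ⟨by simpa using hc⟩
  obtain ⟨e, he⟩ := exists_algEquiv_quadraticAlgebra hdim hα
  obtain ⟨⟨p, q⟩, rfl⟩ := e.surjective z
  exact ⟨p, q, by rw [QuadraticAlgebra.mk_eq_add_smul_omega, map_add, map_smul, he,
    AlgEquiv.commutes]⟩

theorem exists_algHom_apply_eq {A : Type*} [Ring A] [Algebra K A] (hc : ∀ r : K, r ^ 2 ≠ c)
    (hdim : Module.finrank K L = 2) (hα : α ^ 2 = algebraMap K L c) {u : A}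
    (hu : u ^ 2 = algebraMap K A c) : ∃ f : L →ₐ[K] A, f α = u := by
  have : Fact (∀ r : K, r ^ 2 ≠ c + 0 * r) := ⟨by simpa using hc⟩
  obtain ⟨e, he⟩ := exists_algEquiv_quadraticAlgebra hdim hα
  refine ⟨(QuadraticAlgebra.lift ⟨u, ?_⟩).comp e.symm.toAlgHom, ?_⟩
  · rw [← pow_two, hu, zero_smul, add_zero, Algebra.algebraMap_eq_smul_one]
  · simp [← he]

theorem exists_eq_algebraMap_of_conj_eq [NeZero (2 : L)] (hc : ∀ r : K, r ^ 2 ≠ c)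
    (hdim : Module.finrank K L = 2) (hα : α ^ 2 = algebraMap K L c) {conj : L ≃ₐ[K] L}
    (hconj : conj α = -α) {z : L} (hz : conj z = z) : ∃ p : K, z = algebraMap K L p := by
  obtain ⟨p, q, rfl⟩ := exists_eq_algebraMap_add_smul hc hdim hα z
  have hqα : q • α = 0 := by
    rw [map_add, map_smul, AlgEquiv.commutes, hconj, smul_neg] at hz
    have h2 : 2 * q • α = 0 := by linear_combination -hz
    exact (mul_eq_zero.1 h2).resolve_left two_ne_zero
  exact ⟨p, by rw [hqα, add_zero]⟩

theorem star_ringHom_apply {L A : Type*} [Field L] [CharZero L] [Ring A] [StarRing A] [Module ℚ A]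
    {c : ℚ} {α : L} (hc : ∀ r : ℚ, r ^ 2 ≠ c) (hdim : Module.finrank ℚ L = 2)
    (hα : α ^ 2 = algebraMap ℚ L c) {conj : L ≃ₐ[ℚ] L} (hconj : conj α = -α) {f : L →+* A}
    (hf : star (f α) = -f α) (z : L) : star (f z) = f (conj z) := by
  obtain ⟨p, q, rfl⟩ := exists_eq_algebraMap_add_smul hc hdim hα z
  simp only [Algebra.algebraMap_eq_smul_one, map_add, map_rat_smul, map_one, map_neg, hconj, hf,
    star_add, star_one, star_rat_smul]

end QuadraticExtension

section TraceLift

variable {K L V : Type*} [Field K] [Field L] [Algebra K L] [FiniteDimensional K L]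
  [Algebra.IsSeparable K L] [AddCommGroup V] [Module K V] [Module L V] [IsScalarTower K L V]

/-- The unique map `h : V → V → L`, `L`-linear in the first variable, with
`Tr_{L/K} (h x y) = b x y`: the form of the hermitian structure whose trace form is `b`. -/
noncomputable def traceLift (b : LinearMap.BilinForm K V) (x y : V) : L :=
  ((Algebra.traceForm K L).toDual (traceForm_nondegenerate K L)).symm
    (b.flip y ∘ₗ (LinearMap.toSpanSingleton L V x).restrictScalars K)

variable (b : LinearMap.BilinForm K V)

theorem trace_mul_traceLift (a : L) (x y : V) :
    Algebra.trace K L (a * traceLift b x y) = b (a • x) y := by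
  rw [mul_comm]
  exact LinearMap.BilinForm.apply_toDual_symm_apply (hB := traceForm_nondegenerate K L) _ a

theorem trace_traceLift (x y : V) :
    Algebra.trace K L (traceLift b x y) = b x y := by
  simpa using trace_mul_traceLift b (1 : L) x y

variable {b}

theorem eq_traceLift {z : L} {x y : V}
    (h : ∀ a : L, Algebra.trace K L (a * z) = b (a • x) y) : z = traceLift b x y := by
  refine sub_eq_zero.1 ((traceForm_nondegenerate K L).2 _ fun a ↦ ?_)
  rw [Algebra.traceForm_apply, mul_sub, map_sub, h, trace_mul_traceLift, sub_self]

variable (b)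

theorem traceLift_add_left (x y z : V) :
    (traceLift b (x + y) z : L) = traceLift b x z + traceLift b y z :=
  (eq_traceLift fun a ↦ by
    simp only [mul_add, smul_add, map_add, LinearMap.add_apply, trace_mul_traceLift]).symm

theorem traceLift_smul_left (a : L) (x y : V) :
    traceLift b (a • x) y = a * traceLift b x y :=
  (eq_traceLift fun c ↦ by rw [← mul_assoc, trace_mul_traceLift, smul_smul]).symm

variable {b}

theorem traceLift_swap (hb : b.IsSymm) (σ : L ≃ₐ[K] L)
    (hσ : ∀ (a : L) x y, b (a • x) y = b x (σ a • y)) (x y : V) :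
    traceLift b y x = σ (traceLift b x y) := by
  refine (eq_traceLift fun a ↦ ?_).symm
  obtain ⟨c, rfl⟩ := σ.surjective a
  rw [← map_mul, Algebra.trace_eq_of_algEquiv, trace_mul_traceLift, hσ, hb.eq]

theorem traceLift_congr {x y x' y' : V} (h : ∀ a : L, b (a • x') y' = b (a • x) y) :
    (traceLift b x' y' : L) = traceLift b x y :=
  eq_traceLift fun a ↦ by rw [trace_mul_traceLift, h]

theorem exists_pos_traceLift_self_eq {L V : Type*} [Field L] [NumberField L] [AddCommGroup V]
    [Module ℚ V] [Module L V] [IsScalarTower ℚ L V] {c : ℚ} {α : L} (hc : ∀ r : ℚ, r ^ 2 ≠ c)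
    (hdim : Module.finrank ℚ L = 2) (hα : α ^ 2 = algebraMap ℚ L c) {conj : L ≃ₐ[ℚ] L}
    (hconj : conj α = -α) {b : LinearMap.BilinForm ℚ V} (hb : b.IsSymm)
    (hσ : ∀ (a : L) x y, b (a • x) y = b x (conj a • y)) {x : V} (hx : 0 < b x x) :
    ∃ r : ℚ, 0 < r ∧ traceLift b x x = algebraMap ℚ L r := by
  obtain ⟨r, hr⟩ :=
    exists_eq_algebraMap_of_conj_eq hc hdim hα hconj (traceLift_swap hb conj hσ x x).symm
  have htrace : 2 * r = b x x := by
    rw [← trace_traceLift (L := L) b, hr, Algebra.trace_algebraMap, hdim, two_nsmul, two_mul]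
  exact ⟨r, by linarith, hr⟩

end TraceLift

theorem exists_linearEquiv_forall_smul_eq_mul {L A : Type*} [Field L] [NumberField L] [Ring A]
    [Module ℚ A] [FiniteDimensional ℚ A] (f : L →+* A) {n : ℕ}
    (hn : Module.finrank ℚ L * n = Module.finrank ℚ A) :
    ∃ e : (Fin n → L) ≃ₗ[ℚ] A, ∀ a x, e (a • x) = e x * f a := by
  let : Module L A := Module.compHom A (f.toOpposite fun a b ↦ (Commute.all a b).map f)
  have : FiniteDimensional L A := FiniteDimensional.right ℚ L A
  have hrank : Module.finrank L (Fin n → L) = Module.finrank L A := by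
    rw [Module.finrank_fin_fun]
    refine Nat.eq_of_mul_eq_mul_left (Module.finrank_pos (R := ℚ) (M := L)) ?_
    rw [hn, Module.finrank_mul_finrank]
  let e := LinearEquiv.ofFinrankEq (Fin n → L) A hrank
  exact ⟨e.restrictScalars ℚ, fun a x ↦ e.map_smul a x⟩

theorem exists_linearEquiv_orderOf_eq_prime {R M : Type*} [CommRing R] [AddCommGroup M]
    [Module R M] {p : ℕ} [hp : Fact p.Prime] {r : Module.End R M} (hr : r ^ p = 1)
    (hr1 : r ≠ 1) : ∃ σ : M ≃ₗ[R] M, orderOf σ = p ∧ ∀ x, σ x = r x := by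
  let u : (Module.End R M)ˣ := Units.ofPowEqOne r p hr hp.out.ne_zero
  refine ⟨LinearMap.GeneralLinearGroup.generalLinearEquiv R M u, ?_, fun _ ↦ rfl⟩
  rw [MulEquiv.orderOf_eq]
  exact orderOf_eq_prime (Units.pow_ofPowEqOne hr _) fun h ↦ hr1 (congrArg Units.val h)

section ConstructionA

open Matrix

variable {ι : Type*}

/-- The lattice attached to a binary code by Leech and Sloane's Construction A: the integral
vectors whose reduction modulo `2` is a codeword. -/
def constructionA (C : Submodule (ZMod 2) (ι → ZMod 2)) : Submodule ℤ (ι → ℚ) :=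
  ((C.restrictScalars ℤ).comap ((Int.castAddHom (ZMod 2)).toIntLinearMap.compLeft ι)).map
    ((Int.castAddHom ℚ).toIntLinearMap.compLeft ι)

variable {C : Submodule (ZMod 2) (ι → ZMod 2)}

theorem mem_constructionA {v : ι → ℚ} :
    v ∈ constructionA C ↔
      ∃ T : ι → ℤ, (fun i ↦ (T i : ZMod 2)) ∈ C ∧ (fun i ↦ (T i : ℚ)) = v :=
  Iff.rfl

theorem two_smul_intCast_mem_constructionA (T : ι → ℤ) :
    (2 : ℚ) • (fun i ↦ (T i : ℚ)) ∈ constructionA C := by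
  refine mem_constructionA.2 ⟨2 • T, ?_, by ext; simp⟩
  convert C.zero_mem using 1
  ext i
  simpa using Or.inl (CharP.cast_eq_zero (ZMod 2) 2)

instance isLattice_constructionA [Finite ι] (C : Submodule (ZMod 2) (ι → ZMod 2)) :
    (constructionA C).IsLattice ℚ where
  fg := (IsNoetherian.noetherian _).map _
  span_eq_top := by
    have := Fintype.ofFinite ι
    classical
    refine eq_top_iff.2 fun v _ ↦ ?_
    rw [← Finset.univ_sum_single v]
    refine Submodule.sum_mem _ fun i _ ↦ ?_
    have h := Submodule.smul_mem _ (v i / 2) <|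
      Submodule.subset_span (R := ℚ) (two_smul_intCast_mem_constructionA (C := C) (Pi.single i 1))
    convert h using 1
    ext j
    by_cases hij : j = i
    · subst hij; simp
    · simp [hij]

variable [Fintype ι]

theorem exists_mem_constructionA_sum_sq_le {ρ : ℕ}
    (hC : ∀ w : ι → ZMod 2, ∃ c ∈ C, hammingDist w c ≤ ρ) (y : ι → ℚ) :
    ∃ v ∈ constructionA C, ∑ i, (y i - v i) ^ 2 ≤ Fintype.card ι / 4 + 3 / 4 * ρ := by
  obtain ⟨c, hc, hdist⟩ := hC fun i ↦ (round (y i) : ZMod 2)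
  have hcoord (i : ι) : ∃ n : ℤ, (n : ZMod 2) = c i ∧
      (y i - n) ^ 2 ≤ 1 / 4 + 3 / 4 * if (round (y i) : ZMod 2) ≠ c i then 1 else 0 := by
    have hround := abs_le.1 (abs_sub_round (y i))
    by_cases h : (round (y i) : ZMod 2) = c i
    · exact ⟨round (y i), h, by simp only [h, ne_eq, not_true, if_false]; nlinarith⟩
    have hflip : (round (y i) : ZMod 2) + 1 = c i := by
      revert h; generalize (round (y i) : ZMod 2) = a; generalize c i = b; decide +revert
    simp only [h, ne_eq, not_false_eq_true, if_true]
    rcases le_total (round (y i) : ℚ) (y i) with hle | hle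
    · exact ⟨round (y i) + 1, by simpa using hflip, by push_cast; nlinarith⟩
    · refine ⟨round (y i) - 1, ?_, by push_cast; nlinarith⟩
      rw [Int.cast_sub, ← hflip, Int.cast_one, CharTwo.sub_eq_add]
  choose T hTc hT using hcoord
  refine ⟨fun i ↦ T i, mem_constructionA.2 ⟨T, by simpa only [hTc] using hc, rfl⟩, ?_⟩
  calc ∑ i, (y i - T i) ^ 2
      ≤ ∑ i, (1 / 4 + 3 / 4 * if (round (y i) : ZMod 2) ≠ c i then 1 else 0 : ℚ) :=
        Finset.sum_le_sum fun i _ ↦ hT i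
    _ = Fintype.card ι / 4 + 3 / 4 * hammingDist (fun i ↦ (round (y i) : ZMod 2)) c := by
        rw [Finset.sum_add_distrib, ← Finset.mul_sum, Finset.sum_boole, hammingDist]
        simp [div_eq_mul_inv]
    _ ≤ Fintype.card ι / 4 + 3 / 4 * ρ := by gcongr

theorem even_dotProduct_iff (T U : ι → ℤ) :
    (∃ n : ℤ, (1 / 2 : ℚ) * ((fun i ↦ (T i : ℚ)) ⬝ᵥ fun i ↦ (U i : ℚ)) = n) ↔
      (fun i ↦ (T i : ZMod 2)) ⬝ᵥ (fun i ↦ (U i : ZMod 2)) = 0 := by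
  have hcast : (fun i ↦ (T i : ZMod 2)) ⬝ᵥ (fun i ↦ (U i : ZMod 2)) = (T ⬝ᵥ U : ℤ) := by
    simp [dotProduct]
  have hcast' : (fun i ↦ (T i : ℚ)) ⬝ᵥ (fun i ↦ (U i : ℚ)) = (T ⬝ᵥ U : ℤ) := by
    simp [dotProduct]
  rw [hcast, hcast', ZMod.intCast_zmod_eq_zero_iff_dvd]
  refine exists_congr fun n ↦ ?_
  rw [← @Int.cast_inj ℚ]
  push_cast
  constructor <;> intro h <;> linarith

theorem mem_constructionA_iff_forall_dotProduct (hC : ∀ v, v ∈ C ↔ ∀ w ∈ C, v ⬝ᵥ w = 0)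
    (v : ι → ℚ) : v ∈ constructionA C ↔
      ∀ w ∈ constructionA C, ∃ n : ℤ, (1 / 2 : ℚ) * (v ⬝ᵥ w) = n := by
  classical
  constructor
  · rintro hv _ ⟨U, hU, rfl⟩
    obtain ⟨T, hT, rfl⟩ := mem_constructionA.1 hv
    exact (even_dotProduct_iff T U).2 ((hC _).1 hT _ hU)
  · intro hv
    have hint (i : ι) : ∃ n : ℤ, v i = n := by
      obtain ⟨n, hn⟩ := hv _ (two_smul_intCast_mem_constructionA (Pi.single i 1))
      refine ⟨n, hn ▸ ?_⟩
      simp [dotProduct, Pi.single_apply, mul_comm]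
    choose T hT using hint
    obtain rfl : (fun i ↦ (T i : ℚ)) = v := funext fun i ↦ (hT i).symm
    refine mem_constructionA.2 ⟨T, (hC _).2 fun w hw ↦ ?_, rfl⟩
    choose U hU using fun i ↦ ZMod.intCast_surjective (w i)
    obtain rfl : (fun i ↦ (U i : ZMod 2)) = w := funext hU
    exact (even_dotProduct_iff T U).1 (hv _ (mem_constructionA.2 ⟨U, hw, rfl⟩))

section GraphCode

variable {R n : Type*} [CommRing R] [Fintype n]

/-- The code of length `2 * card n` with parity check matrix `[1 | -M]`. -/
def graphCode (M : Matrix n n R) : Submodule R (n ⊕ n → R) :=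
  LinearMap.ker (LinearMap.funLeft R R Sum.inl - M.mulVecLin ∘ₗ LinearMap.funLeft R R Sum.inr)

theorem mem_graphCode {M : Matrix n n R} {v : n ⊕ n → R} :
    v ∈ graphCode M ↔ v ∘ Sum.inl = M *ᵥ (v ∘ Sum.inr) := by
  rw [graphCode, LinearMap.mem_ker, LinearMap.sub_apply, sub_eq_zero]
  rfl

theorem mem_graphCode_iff_forall_dotProduct [DecidableEq n] {M : Matrix n n R}
    (hM : Mᵀ * M = -1) (v : n ⊕ n → R) :
    v ∈ graphCode M ↔ ∀ w ∈ graphCode M, v ⬝ᵥ w = 0 := by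
  have hdot (w) (hw : w ∈ graphCode M) :
      v ⬝ᵥ w = (Mᵀ *ᵥ (v ∘ Sum.inl) + v ∘ Sum.inr) ⬝ᵥ (w ∘ Sum.inr) := by
    rw [add_dotProduct, ← vecMul_transpose, transpose_transpose, ← dotProduct_mulVec,
      ← mem_graphCode.1 hw]
    exact Fintype.sum_sum_type _
  constructor
  · intro hv w hw
    rw [hdot w hw, mem_graphCode.1 hv, mulVec_mulVec, hM, neg_mulVec, one_mulVec,
      neg_add_cancel, zero_dotProduct]
  · intro h
    have hzero : Mᵀ *ᵥ (v ∘ Sum.inl) + v ∘ Sum.inr = 0 := by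
      refine dotProduct_eq_zero _ fun t ↦ ?_
      have ht : Sum.elim (M *ᵥ t) t ∈ graphCode M := mem_graphCode.2 rfl
      rw [← h _ ht, hdot _ ht, Sum.elim_comp_inr]
    have hM' : M * -Mᵀ = 1 := mul_eq_one_comm.1 (by rw [neg_mul, hM, neg_neg])
    rw [mem_graphCode, eq_neg_of_add_eq_zero_right hzero, ← neg_mulVec, mulVec_mulVec, hM',
      one_mulVec]

end GraphCode

/-- The right half of the systematic parity check matrix of the extended Hamming code. -/
def hammingMatrix : Matrix (Fin 4) (Fin 4) (ZMod 2) :=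
  !![0, 1, 1, 1; 1, 1, 1, 0; 1, 1, 0, 1; 1, 0, 1, 1]

/-- The extended binary Hamming code of length `8`. -/
def extendedHammingCode : Submodule (ZMod 2) (Fin 4 ⊕ Fin 4 → ZMod 2) :=
  graphCode hammingMatrix

theorem mem_extendedHammingCode_iff_forall_dotProduct (v : Fin 4 ⊕ Fin 4 → ZMod 2) :
    v ∈ extendedHammingCode ↔ ∀ w ∈ extendedHammingCode, v ⬝ᵥ w = 0 :=
  mem_graphCode_iff_forall_dotProduct (by decide) v

theorem exists_mem_extendedHammingCode_hammingDist_le_two (w : Fin 4 ⊕ Fin 4 → ZMod 2) :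
    ∃ c ∈ extendedHammingCode, hammingDist w c ≤ 2 := by
  have hsyndrome : ∀ s : Fin 4 → ZMod 2, ∃ e f : Fin 4 → ZMod 2,
      e - hammingMatrix *ᵥ f = s ∧ hammingNorm (Sum.elim e f) ≤ 2 := by
    decide
  obtain ⟨e, f, hs, hnorm⟩ := hsyndrome (w ∘ Sum.inl - hammingMatrix *ᵥ (w ∘ Sum.inr))
  refine ⟨w - Sum.elim e f, mem_graphCode.2 ?_, ?_⟩
  · change w ∘ Sum.inl - e = hammingMatrix *ᵥ (w ∘ Sum.inr - f)
    rw [mulVec_sub]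
    linear_combination -hs
  · rwa [hammingDist_comm, hammingDist_eq_hammingNorm, neg_sub, sub_add_cancel]

end ConstructionA

section Icosians

open Quaternion
open scoped QuadraticAlgebra

/-- The golden field `ℚ(√5)`, with `ω` the golden ratio. -/
abbrev GoldenField : Type := QuadraticAlgebra ℚ 1 1

instance fact_sq_ne_one_add : Fact (∀ r : ℚ, r ^ 2 ≠ 1 + 1 * r) where
  out r h := by
    have h5 : (2 * r - 1) ^ 2 = 5 := by linear_combination 4 * h
    refine Nat.prime_five.irrational_sqrt ⟨|2 * r - 1|, ?_⟩
    rw [Rat.cast_abs, ← Real.sqrt_sq_eq_abs]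
    congr 1
    exact_mod_cast h5

/-- The golden integers `ℤ[ω]`. -/
def goldenIntegers : Subring GoldenField where
  carrier := {z | ∃ m n : ℤ, z = ⟨m, n⟩}
  mul_mem' := by
    rintro _ _ ⟨m, n, rfl⟩ ⟨m', n', rfl⟩
    exact ⟨m * m' + n * n', m * n' + n * m' + n * n', by ext <;> simp⟩
  one_mem' := ⟨1, 0, by ext <;> simp⟩
  add_mem' := by
    rintro _ _ ⟨m, n, rfl⟩ ⟨m', n', rfl⟩
    exact ⟨m + m', n + n', by ext <;> simp⟩
  zero_mem' := ⟨0, 0, by ext <;> simp⟩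
  neg_mem' := by
    rintro _ ⟨m, n, rfl⟩
    exact ⟨-m, -n, by ext <;> simp⟩

theorem omega_mem_goldenIntegers : (ω : GoldenField) ∈ goldenIntegers :=
  ⟨0, 1, by ext <;> simp⟩

/-- An icosian of order `4`. -/
@[simps]
def icosianS : ℍ[GoldenField] := ⟨0, 1, 0, 0⟩

/-- An icosian of order `6`; its product `icosianS * icosianT` has order `10`. -/
@[simps]
def icosianT : ℍ[GoldenField] := ⟨⟨1 / 2, 0⟩, ⟨0, -1 / 2⟩, ⟨-1 / 2, 1 / 2⟩, 0⟩

/-- The element with coordinates `a, b, c, d` in the basis `1, s, t, s t` of the icosians. -/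
def ofIcosianCoeffs (a b c d : GoldenField) : ℍ[GoldenField] :=
  a + b * icosianS + c * icosianT + d * (icosianS * icosianT)

theorem icosianS_mul_ofIcosianCoeffs (a b c d : GoldenField) :
    icosianS * ofIcosianCoeffs a b c d = ofIcosianCoeffs (-b) a (-d) c := by
  ext <;> simp [ofIcosianCoeffs] <;> ring

theorem icosianT_mul_ofIcosianCoeffs (a b c d : GoldenField) :
    icosianT * ofIcosianCoeffs a b c d =
      ofIcosianCoeffs (ω * b - c) (b + d) (a + c + ω * d) (-b) := by
  ext <;> simp [ofIcosianCoeffs] <;> ring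

theorem normSq_ofIcosianCoeffs (a b c d : GoldenField) :
    normSq (ofIcosianCoeffs a b c d) =
      a * a + b * b + c * c + d * d + a * c + ω * a * d - ω * b * c + b * d := by
  ext <;> simp [ofIcosianCoeffs, normSq_def', pow_two] <;> ring

/-- Membership in the `ℤ[ω]`-span of `1, s, t, s t`. -/
def IsIcosian (x : ℍ[GoldenField]) : Prop :=
  ∃ a ∈ goldenIntegers, ∃ b ∈ goldenIntegers, ∃ c ∈ goldenIntegers, ∃ d ∈ goldenIntegers,
    ofIcosianCoeffs a b c d = x

namespace IsIcosian

variable {x y : ℍ[GoldenField]}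

theorem add : IsIcosian x → IsIcosian y → IsIcosian (x + y) := by
  rintro ⟨a, ha, b, hb, c, hc, d, hd, rfl⟩ ⟨a', ha', b', hb', c', hc', d', hd', rfl⟩
  exact ⟨_, add_mem ha ha', _, add_mem hb hb', _, add_mem hc hc', _, add_mem hd hd',
    by ext <;> simp [ofIcosianCoeffs] <;> ring⟩

theorem coe_mul {g : GoldenField} (hg : g ∈ goldenIntegers) :
    IsIcosian x → IsIcosian (g * x) := by
  rintro ⟨a, ha, b, hb, c, hc, d, hd, rfl⟩
  exact ⟨_, mul_mem hg ha, _, mul_mem hg hb, _, mul_mem hg hc, _, mul_mem hg hd,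
    by simp only [ofIcosianCoeffs, Quaternion.coe_mul, mul_add, mul_assoc]⟩

theorem icosianS_mul : IsIcosian x → IsIcosian (icosianS * x) := by
  rintro ⟨a, ha, b, hb, c, hc, d, hd, rfl⟩
  exact ⟨_, neg_mem hb, _, ha, _, neg_mem hd, _, hc,
    (icosianS_mul_ofIcosianCoeffs a b c d).symm⟩

theorem icosianT_mul : IsIcosian x → IsIcosian (icosianT * x) := by
  rintro ⟨a, ha, b, hb, c, hc, d, hd, rfl⟩
  have hω := omega_mem_goldenIntegers
  exact ⟨_, sub_mem (mul_mem hω hb) hc, _, add_mem hb hd,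
    _, add_mem (add_mem ha hc) (mul_mem hω hd), _, neg_mem hb,
    (icosianT_mul_ofIcosianCoeffs a b c d).symm⟩

theorem mul : IsIcosian x → IsIcosian y → IsIcosian (x * y) := by
  rintro ⟨a, ha, b, hb, c, hc, d, hd, rfl⟩ hy
  simp only [ofIcosianCoeffs, add_mul, mul_assoc]
  exact (((hy.coe_mul ha).add (hy.icosianS_mul.coe_mul hb)).add (hy.icosianT_mul.coe_mul hc)).add
    (hy.icosianT_mul.icosianS_mul.coe_mul hd)

theorem normSq_mem : IsIcosian x → normSq x ∈ goldenIntegers := by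
  rintro ⟨a, ha, b, hb, c, hc, d, hd, rfl⟩
  have hω := omega_mem_goldenIntegers
  rw [normSq_ofIcosianCoeffs]
  refine add_mem (sub_mem (add_mem (add_mem (add_mem (add_mem (add_mem
    (mul_mem ha ha) (mul_mem hb hb)) (mul_mem hc hc)) (mul_mem hd hd)) (mul_mem ha hc))
    (mul_mem (mul_mem hω ha) hd)) (mul_mem (mul_mem hω hb) hc)) (mul_mem hb hd)

end IsIcosian

/-- The icosian ring, a maximal order in the Hamilton quaternions over `ℚ(√5)`. -/
def icosians : Subring ℍ[GoldenField] where
  carrier := {x | IsIcosian x}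
  mul_mem' := IsIcosian.mul
  one_mem' := ⟨1, one_mem _, 0, zero_mem _, 0, zero_mem _, 0, zero_mem _,
    by simp [ofIcosianCoeffs]⟩
  add_mem' := IsIcosian.add
  zero_mem' := ⟨0, zero_mem _, 0, zero_mem _, 0, zero_mem _, 0, zero_mem _,
    by simp [ofIcosianCoeffs]⟩
  neg_mem' {x} hx := by simpa using IsIcosian.coe_mul (neg_mem (one_mem goldenIntegers)) hx

/-- Twice the rational coordinates of a quaternion over `ℚ(√5)`. -/
def doubledCoords : ℍ[GoldenField] ≃ₗ[ℚ] (Fin 4 ⊕ Fin 4 → ℚ) where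
  toFun x := Sum.elim ![2 * x.re.re, 2 * x.re.im, 2 * x.imI.re, 2 * x.imI.im]
    ![2 * x.imJ.re, 2 * x.imJ.im, 2 * x.imK.re, 2 * x.imK.im]
  invFun v := ⟨⟨v (.inl 0) / 2, v (.inl 1) / 2⟩, ⟨v (.inl 2) / 2, v (.inl 3) / 2⟩,
    ⟨v (.inr 0) / 2, v (.inr 1) / 2⟩, ⟨v (.inr 2) / 2, v (.inr 3) / 2⟩⟩
  map_add' x y := by
    ext i; rcases i with i | i <;> fin_cases i <;> simp [mul_add]
  map_smul' c x := by
    ext i; rcases i with i | i <;> fin_cases i <;> simp [mul_left_comm]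
  left_inv x := by ext <;> simp
  right_inv v := by
    ext i; rcases i with i | i <;> fin_cases i <;> simp [mul_div_cancel₀]

theorem doubledCoords_apply (x : ℍ[GoldenField]) :
    doubledCoords x = Sum.elim ![2 * x.re.re, 2 * x.re.im, 2 * x.imI.re, 2 * x.imI.im]
      ![2 * x.imJ.re, 2 * x.imJ.im, 2 * x.imK.re, 2 * x.imK.im] := rfl

theorem mem_extendedHammingCode_intCast_iff (T : Fin 4 ⊕ Fin 4 → ℤ) :
    (fun i ↦ (T i : ZMod 2)) ∈ extendedHammingCode ↔
      2 ∣ T (.inl 0) - (T (.inr 1) + T (.inr 2) + T (.inr 3)) ∧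
      2 ∣ T (.inl 1) - (T (.inr 0) + T (.inr 1) + T (.inr 2)) ∧
      2 ∣ T (.inl 2) - (T (.inr 0) + T (.inr 1) + T (.inr 3)) ∧
      2 ∣ T (.inl 3) - (T (.inr 0) + T (.inr 2) + T (.inr 3)) := by
  have hcast (m n : ℤ) : (m : ZMod 2) = n ↔ 2 ∣ m - n :=
    ((ZMod.intCast_eq_intCast_iff_dvd_sub n m 2).symm.trans eq_comm).symm
  simp [extendedHammingCode, mem_graphCode, funext_iff, Fin.forall_fin_succ, hammingMatrix,
    dotProduct, Fin.sum_univ_succ, ← hcast, add_assoc]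

theorem doubledCoords_mem_of_isIcosian {x : ℍ[GoldenField]} (hx : IsIcosian x) :
    doubledCoords x ∈ constructionA extendedHammingCode := by
  obtain ⟨_, ⟨a, a', rfl⟩, _, ⟨b, b', rfl⟩, _, ⟨c, c', rfl⟩, _, ⟨d, d', rfl⟩, rfl⟩ := hx
  refine mem_constructionA.2 ⟨Sum.elim
    ![2 * a + c + d', 2 * a' + c' + d + d', 2 * b - c' + d, 2 * b' - c - c' + d']
    ![c' - c, c, d' - d, d], ?_, ?_⟩
  · rw [mem_extendedHammingCode_intCast_iff]
    simp only [Sum.elim_inl, Sum.elim_inr, Matrix.cons_val]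
    omega
  · rw [doubledCoords_apply]
    ext i
    rcases i with i | i <;> fin_cases i <;> simp [ofIcosianCoeffs] <;> ring

theorem isIcosian_of_doubledCoords_mem {x : ℍ[GoldenField]}
    (hx : doubledCoords x ∈ constructionA extendedHammingCode) : IsIcosian x := by
  obtain ⟨T, hT, hx⟩ := mem_constructionA.1 hx
  obtain ⟨⟨k₀, h₀⟩, ⟨k₁, h₁⟩, ⟨k₂, h₂⟩, ⟨k₃, h₃⟩⟩ := (mem_extendedHammingCode_intCast_iff T).1 hT
  rw [sub_eq_iff_eq_add] at h₀ h₁ h₂ h₃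
  refine ⟨_, ⟨k₀, k₁ - T (.inr 3), rfl⟩,
    _, ⟨k₂ + T (.inr 0) + T (.inr 1), k₃ + T (.inr 0) + T (.inr 1), rfl⟩,
    _, ⟨T (.inr 1), T (.inr 0) + T (.inr 1), rfl⟩,
    _, ⟨T (.inr 3), T (.inr 2) + T (.inr 3), rfl⟩, doubledCoords.injective ?_⟩
  rw [← hx, doubledCoords_apply]
  ext i
  rcases i with i | i <;> fin_cases i <;> simp [ofIcosianCoeffs, h₀, h₁, h₂, h₃] <;> ring

theorem mem_icosians_iff {x : ℍ[GoldenField]} :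
    x ∈ icosians ↔ doubledCoords x ∈ constructionA extendedHammingCode :=
  ⟨doubledCoords_mem_of_isIcosian, isIcosian_of_doubledCoords_mem⟩

theorem re_normSq_eq_sum (x : ℍ[GoldenField]) :
    (normSq x).re = 1 / 4 * ∑ i, doubledCoords x i ^ 2 := by
  simp [normSq_def', doubledCoords_apply, Fin.sum_univ_succ, pow_two]
  ring

theorem re_normSq_nonneg (x : ℍ[GoldenField]) : 0 ≤ (normSq x).re := by
  rw [re_normSq_eq_sum]
  positivity

theorem re_normSq_pos {x : ℍ[GoldenField]} (hx : x ≠ 0) : 0 < (normSq x).re := by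
  refine (re_normSq_nonneg x).lt_of_ne' fun h ↦ hx (doubledCoords.injective ?_)
  rw [re_normSq_eq_sum, mul_eq_zero_iff_left (by norm_num),
    Finset.sum_eq_zero_iff_of_nonneg fun _ _ ↦ sq_nonneg _] at h
  ext i
  simpa using h i (Finset.mem_univ i)

theorem normSq_ne_zero_of_ne_zero {x : ℍ[GoldenField]} (hx : x ≠ 0) : normSq x ≠ 0 :=
  fun h ↦ (re_normSq_pos hx).ne' (congrArg QuadraticAlgebra.re h)

theorem isUnit_of_isUnit_normSq {R : Type*} [CommRing R] {x : ℍ[R]} (hx : IsUnit (normSq x)) :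
    IsUnit x := by
  obtain ⟨u, hu⟩ := hx
  refine ⟨⟨x, (↑u⁻¹ : R) • star x, ?_, ?_⟩, rfl⟩
  · rw [mul_smul_comm, self_mul_star, smul_coe, ← hu, Units.inv_mul, coe_one]
  · rw [smul_mul_assoc, star_mul_self, smul_coe, ← hu, Units.inv_mul, coe_one]

theorem isUnit_goldenQuaternion_of_ne_zero {x : ℍ[GoldenField]} (hx : x ≠ 0) : IsUnit x :=
  isUnit_of_isUnit_normSq (normSq_ne_zero_of_ne_zero hx).isUnit

/-- The real embedding of the golden field sending `ω` to the root `t` of `X² - X - 1`. -/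
noncomputable def goldenEmbedding (t : ℝ) (ht : t ^ 2 = t + 1) : GoldenField →+* ℝ :=
  (QuadraticAlgebra.lift (R := ℚ) (a := 1) (b := 1)
    ⟨t, by rw [one_smul, one_smul, ← pow_two, ht, add_comm]⟩).toRingHom

theorem goldenEmbedding_apply (t : ℝ) (ht : t ^ 2 = t + 1) (z : GoldenField) :
    goldenEmbedding t ht z = z.re + z.im * t := by
  simp [goldenEmbedding, Algebra.smul_def]

theorem goldenEmbedding_normSq_nonneg (t : ℝ) (ht : t ^ 2 = t + 1) (x : ℍ[GoldenField]) :
    0 ≤ goldenEmbedding t ht (normSq x) := by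
  simp only [normSq_def', map_add, map_pow]
  positivity

theorem norm_eq_goldenEmbedding_mul (z : GoldenField) :
    ((QuadraticAlgebra.norm z : ℚ) : ℝ) = goldenEmbedding _ Real.goldenRatio_sq z *
      goldenEmbedding _ Real.goldenConj_sq z := by
  simp only [goldenEmbedding_apply, QuadraticAlgebra.norm_def]
  push_cast
  linear_combination -(z.re * z.im : ℝ) * Real.goldenRatio_add_goldenConj -
    (z.im : ℝ) ^ 2 * Real.goldenRatio_mul_goldenConj

theorem norm_normSq_nonneg (x : ℍ[GoldenField]) : 0 ≤ QuadraticAlgebra.norm (normSq x) := by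
  have h := mul_nonneg (goldenEmbedding_normSq_nonneg _ Real.goldenRatio_sq x)
    (goldenEmbedding_normSq_nonneg _ Real.goldenConj_sq x)
  rw [← norm_eq_goldenEmbedding_mul] at h
  exact_mod_cast h

theorem golden_norm_le (z : GoldenField) : QuadraticAlgebra.norm z ≤ 5 / 4 * z.re ^ 2 := by
  rw [QuadraticAlgebra.norm_def]
  linarith [sq_nonneg (z.im - z.re / 2)]

theorem norm_normSq_ne_zero {x : ℍ[GoldenField]} (hx : x ≠ 0) :
    QuadraticAlgebra.norm (normSq x) ≠ 0 :=
  fun h ↦ normSq_ne_zero_of_ne_zero hx (QuadraticAlgebra.norm_eq_zero_iff_eq_zero.1 h)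

theorem exists_icosian_norm_normSq_sub_lt_one (y : ℍ[GoldenField]) :
    ∃ g ∈ icosians, QuadraticAlgebra.norm (normSq (y - g)) < 1 := by
  obtain ⟨v, hv, hle⟩ := exists_mem_constructionA_sum_sq_le
    exists_mem_extendedHammingCode_hammingDist_le_two (doubledCoords y)
  obtain ⟨g, rfl⟩ := doubledCoords.surjective v
  have hre : (normSq (y - g)).re ≤ 7 / 8 := by
    rw [re_normSq_eq_sum, map_sub]
    simp only [Fintype.card_sum, Fintype.card_fin] at hle
    simp only [Pi.sub_apply]
    norm_num at hle ⊢
    linarith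
  refine ⟨g, mem_icosians_iff.2 hv, (golden_norm_le _).trans_lt ?_⟩
  nlinarith [re_normSq_nonneg (y - g)]

theorem exists_nat_norm_normSq_eq (x : icosians) :
    ∃ n : ℕ, QuadraticAlgebra.norm (normSq (x : ℍ[GoldenField])) = n := by
  obtain ⟨m, n, hmn⟩ := x.2.normSq_mem
  have hnorm : QuadraticAlgebra.norm (normSq (x : ℍ[GoldenField])) =
      ((m * m + m * n - n * n : ℤ) : ℚ) := by
    rw [hmn, QuadraticAlgebra.norm_def]
    push_cast
    ring
  have hnonneg : 0 ≤ m * m + m * n - n * n := by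
    exact_mod_cast hnorm ▸ norm_normSq_nonneg (x : ℍ[GoldenField])
  exact ⟨(m * m + m * n - n * n).toNat, by
    rw [hnorm, ← Int.cast_natCast, Int.toNat_of_nonneg hnonneg]⟩

instance isPrincipalIdealRing_icosians : IsPrincipalIdealRing icosians := by
  choose N hN using exists_nat_norm_normSq_eq
  refine isPrincipalIdealRing_of_exists_lt N fun a b hb ↦ ?_
  have hb' : (b : ℍ[GoldenField]) ≠ 0 := by simpa using hb
  obtain ⟨u, hu⟩ := isUnit_goldenQuaternion_of_ne_zero hb'
  obtain ⟨g, hg, hlt⟩ := exists_icosian_norm_normSq_sub_lt_one (a * ↑u⁻¹)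
  refine ⟨⟨g, hg⟩, ?_⟩
  have hfactor : (a : ℍ[GoldenField]) - g * (b : ℍ[GoldenField]) = (a * ↑u⁻¹ - g) * b := by
    rw [sub_mul, ← hu, mul_assoc, Units.inv_mul, mul_one]
  have hpos := (norm_normSq_nonneg (b : ℍ[GoldenField])).lt_of_ne' (norm_normSq_ne_zero hb')
  rw [← Nat.cast_lt (α := ℚ), ← hN, ← hN]
  change QuadraticAlgebra.norm (normSq ((a : ℍ[GoldenField]) - g * (b : ℍ[GoldenField]))) < _
  rw [hfactor, map_mul, map_mul]
  exact mul_lt_of_lt_one_left hpos hlt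

/-- The rational part, in the basis `1, ω`, of the reduced trace pairing `2 Re (x ȳ)`: a form
of type `E₈` on the icosians. -/
def icosianForm : LinearMap.BilinForm ℚ ℍ[GoldenField] :=
  LinearMap.mk₂ ℚ (fun x y ↦ 2 * (x * star y).re.re)
    (by intros; simp; ring) (by intros; simp; ring) (by intros; simp; ring) (by intros; simp; ring)

theorem icosianForm_apply (x y : ℍ[GoldenField]) :
    icosianForm x y = 2 * (x * star y).re.re := rfl

theorem quaternion_re_mul_comm {R : Type*} [CommRing R] (x y : ℍ[R]) : (x * y).re = (y * x).re := by
  simp only [re_mul]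
  ring

theorem icosianForm_isSymm : icosianForm.IsSymm where
  eq x y := by
    rw [icosianForm_apply, icosianForm_apply, ← re_star, star_mul, star_star]

theorem icosianForm_mul_right (x y w : ℍ[GoldenField]) :
    icosianForm (x * w) y = icosianForm x (y * star w) := by
  simp only [icosianForm_apply, star_mul, star_star, mul_assoc]

theorem icosianForm_mul_left {u : ℍ[GoldenField]} (hu : normSq u = 1) (x y : ℍ[GoldenField]) :
    icosianForm (u * x) (u * y) = icosianForm x y := by
  rw [icosianForm_apply, star_mul, mul_assoc, quaternion_re_mul_comm, mul_assoc, mul_assoc,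
    star_mul_self, hu, coe_one, mul_one, icosianForm_apply]

theorem icosianForm_self (x : ℍ[GoldenField]) : icosianForm x x = 2 * (normSq x).re := by
  rw [icosianForm_apply, self_mul_star, re_coe]

theorem icosianForm_eq_dotProduct (x y : ℍ[GoldenField]) :
    icosianForm x y = 1 / 2 * (doubledCoords x ⬝ᵥ doubledCoords y) := by
  simp [icosianForm_apply, doubledCoords_apply, dotProduct, Fin.sum_univ_succ]
  ring

theorem icosianForm_self_even {x : ℍ[GoldenField]} (hx : x ∈ icosians) :
    ∃ n : ℤ, icosianForm x x = 2 * n := by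
  obtain ⟨m, n, hmn⟩ := hx.normSq_mem
  exact ⟨m, by rw [icosianForm_self, hmn]⟩

theorem mem_icosians_iff_forall_icosianForm {x : ℍ[GoldenField]} :
    x ∈ icosians ↔ ∀ y ∈ icosians, ∃ n : ℤ, icosianForm x y = n := by
  simp only [mem_icosians_iff, icosianForm_eq_dotProduct]
  rw [mem_constructionA_iff_forall_dotProduct mem_extendedHammingCode_iff_forall_dotProduct]
  exact doubledCoords.surjective.forall

/-- The pure quaternion `a i + b j + c k`. -/
@[simps]
def pureQuaternion {R : Type*} [CommRing R] (a b c : R) : ℍ[R] := ⟨0, a, b, c⟩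

theorem normSq_pureQuaternion {R : Type*} [CommRing R] (a b c : R) :
    normSq (pureQuaternion a b c) = a ^ 2 + b ^ 2 + c ^ 2 := by
  simp [normSq_def']

theorem quaternion_mul_self_eq_neg_natCast {R : Type*} [CommRing R] {p : ℍ[R]} {m : ℕ}
    (hstar : star p = -p) (hp : normSq p = m) : p * p = -m := by
  rw [← neg_eq_iff_eq_neg, ← mul_neg, ← hstar, self_mul_star, hp, coe_natCast]

/-- If `5 ∤ m` this is the representation of `m` by `x² + 2y² + 10z²`; powers of `5` are then
supplied by the squares of `√5 = 2ω - 1`. -/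
theorem exists_star_eq_neg_normSq_eq {m : ℕ} (hm : 0 < m) :
    ∃ p : ℍ[GoldenField], star p = -p ∧ normSq p = m := by
  obtain ⟨j, k, h5, rfl⟩ := Nat.exists_eq_pow_mul_and_not_dvd hm.ne' 5 (by norm_num)
  obtain ⟨x, y, z, hxyz⟩ :=
    exists_rat_eq_sq_add_two_mul_sq_add_ten_mul_sq (Nat.pos_of_mul_pos_left hm) h5
  obtain ⟨s, hs⟩ : ∃ s : GoldenField, s ^ 2 = 5 :=
    ⟨2 * ω - 1, by ext <;> simp [pow_two] <;> norm_num⟩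
  have hk : (k : GoldenField) = x ^ 2 + 2 * y ^ 2 + 10 * z ^ 2 := by
    exact_mod_cast congrArg (Rat.cast (K := GoldenField)) hxyz
  have hsj : (s ^ j) ^ 2 = 5 ^ j := by rw [← pow_mul, mul_comm, pow_mul, hs]
  refine ⟨pureQuaternion (s ^ j * x) (s ^ j * (y + z * s)) (s ^ j * (y - z * s)),
    star_eq_neg.2 rfl, ?_⟩
  rw [normSq_pureQuaternion]
  push_cast
  rw [hk, ← hsj]
  linear_combination 2 * (s ^ j) ^ 2 * z ^ 2 * hs

/-- A primitive fifth root of unity in the icosians. -/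
def icosianZeta : ℍ[GoldenField] := star icosianS * icosianT

theorem icosianZeta_mul_ofIcosianCoeffs (a b c d : GoldenField) :
    icosianZeta * ofIcosianCoeffs a b c d =
      ofIcosianCoeffs (b + d) (c - ω * b) (-b) (-(a + c + ω * d)) := by
  rw [icosianZeta, mul_assoc, icosianT_mul_ofIcosianCoeffs]
  ext <;> simp [ofIcosianCoeffs] <;> ring

theorem ofIcosianCoeffs_one : ofIcosianCoeffs 1 0 0 0 = 1 := by
  simp [ofIcosianCoeffs]

theorem icosianZeta_mem : icosianZeta ∈ icosians :=
  ⟨0, zero_mem _, 0, zero_mem _, 0, zero_mem _, -1, neg_mem (one_mem _),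
    by ext <;> simp [icosianZeta, ofIcosianCoeffs]⟩

theorem normSq_icosianZeta : normSq icosianZeta = 1 := by
  rw [icosianZeta, map_mul, normSq_star, normSq_def', normSq_def']
  ext <;> simp [pow_two] <;> norm_num

theorem icosianZeta_pow_five : icosianZeta ^ 5 = 1 := by
  have hω : (ω : GoldenField) * ω = ω + 1 := by ext <;> simp
  rw [← mul_one (_ ^ 5), ← ofIcosianCoeffs_one]
  simp only [pow_succ, pow_zero, one_mul, mul_assoc, icosianZeta_mul_ofIcosianCoeffs]
  congr 1
  all_goals simp [hω]

theorem icosianZeta_ne_one : icosianZeta ≠ 1 := fun h ↦ by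
  simpa [icosianZeta] using congrArg (fun x ↦ x.imK.re) h

/-- The icosians as a `ℤ`-lattice, isometric to `E₈` by `icosianForm`. -/
def icosianLattice : Submodule ℤ ℍ[GoldenField] :=
  (constructionA extendedHammingCode).comap (doubledCoords.restrictScalars ℤ).toLinearMap

theorem mem_icosianLattice {x : ℍ[GoldenField]} : x ∈ icosianLattice ↔ x ∈ icosians :=
  mem_icosians_iff.symm

instance isLattice_icosianLattice : icosianLattice.IsLattice ℚ :=
  isLattice_comap doubledCoords _

theorem exists_conj_ringHom_mem_icosians {O : Type*} [Ring O] [Module.Finite ℤ O]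
    (f : O →+* ℍ[GoldenField]) :
    ∃ u : ℍ[GoldenField]ˣ, ∀ a, ↑u * f a * ↑u⁻¹ ∈ icosians := by
  have hfg : (LinearMap.range f.toAddMonoidHom.toIntLinearMap).FG :=
    Module.Finite.iff_fg.1 inferInstance
  obtain ⟨d, hd, hdf⟩ := exists_ne_zero_forall_smul_mem
    (Submodule.IsLattice.span_eq_top (M := icosianLattice)) hfg
  refine exists_unit_conj_mem (fun x _ ↦ isUnit_goldenQuaternion_of_ne_zero) f (d := d) ?_
    fun a ↦ ?_
  · exact fun h ↦ hd (by simpa using congrArg (fun x ↦ x.re.re) h)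
  · rw [← zsmul_eq_mul]
    exact mem_icosianLattice.1 (hdf (f a) ⟨a, rfl⟩)

theorem sq_ne_neg_natCast {ℓ : ℕ} (hℓ : 0 < ℓ) (r : ℚ) : r ^ 2 ≠ -ℓ :=
  ((neg_neg_of_pos (Nat.cast_pos.2 hℓ)).trans_le (sq_nonneg r)).ne'

theorem exists_ringHom_mapsTo_icosians {L : Type*} [Field L] [NumberField L] {ℓ : ℕ} (hℓ : 0 < ℓ)
    {α : L} (hα : α ^ 2 = -ℓ) (hdim : Module.finrank ℚ L = 2) :
    ∃ f : L →+* ℍ[GoldenField], (f α).re = 0 ∧ ∀ a : 𝓞 L, f a ∈ icosians := by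
  obtain ⟨p, hp, hpℓ⟩ := exists_star_eq_neg_normSq_eq hℓ
  obtain ⟨f₀, hf₀⟩ := exists_algHom_apply_eq (sq_ne_neg_natCast hℓ) hdim (by simpa using hα)
    (u := p) (by rw [pow_two, quaternion_mul_self_eq_neg_natCast hp hpℓ]; simp)
  obtain ⟨u, hu⟩ := exists_conj_ringHom_mem_icosians (f₀.toRingHom.comp (algebraMap (𝓞 L) L))
  refine ⟨(MulSemiringAction.toRingHom _ _ (ConjAct.toConjAct u)).comp f₀.toRingHom, ?_, hu⟩
  change (↑u * f₀ α * ↑u⁻¹).re = 0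
  rw [quaternion_re_mul_comm, Units.inv_mul_cancel_left, hf₀, star_eq_neg.1 hp]

end Icosians

section IcosianCoordinates

open Quaternion

variable {L V : Type*} [Field L] [AddCommGroup V] [Module L V] [Module ℚ V]

variable (L V) in
/-- An identification of an `L`-vector space `V` with the quaternions over `ℚ(√5)`, turning scalar
multiplication into right multiplication through an embedding of `L` that maps `𝓞 L` into the
icosians. -/
structure IcosianCoordinates where
  hom : L →+* ℍ[GoldenField]
  equiv : V ≃ₗ[ℚ] ℍ[GoldenField]
  equiv_smul (a : L) (x : V) : equiv (a • x) = equiv x * hom a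
  hom_mem (a : 𝓞 L) : hom a ∈ icosians

namespace IcosianCoordinates

section Lattice

variable [Module (𝓞 L) V] [IsScalarTower (𝓞 L) L V] (c : IcosianCoordinates L V)

theorem equiv_integer_smul (a : 𝓞 L) (x : V) : c.equiv (a • x) = c.equiv x * c.hom a := by
  rw [← algebraMap_smul L a x, equiv_smul]

/-- The icosians as an `𝓞 L`-submodule of `V`. -/
def lattice : Submodule (𝓞 L) V where
  carrier := {x | c.equiv x ∈ icosians}
  add_mem' hx hy := by
    rw [Set.mem_ofPred_eq, map_add]
    exact add_mem hx hy
  zero_mem' := by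
    rw [Set.mem_ofPred_eq, map_zero]
    exact zero_mem _
  smul_mem' a x hx := by
    rw [Set.mem_ofPred_eq, equiv_integer_smul]
    exact mul_mem hx (c.hom_mem a)

theorem mem_lattice {x : V} : x ∈ c.lattice ↔ c.equiv x ∈ icosians := Iff.rfl

instance isLattice_restrictScalars_lattice : (c.lattice.restrictScalars ℤ).IsLattice ℚ := by
  have hcomap : c.lattice.restrictScalars ℤ =
      icosianLattice.comap (c.equiv.restrictScalars ℤ).toLinearMap := by
    ext x
    exact mem_icosianLattice.symm
  exact hcomap ▸ isLattice_comap c.equiv icosianLattice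

theorem lattice_fg : c.lattice.FG :=
  .of_restrictScalars ℤ (Submodule.IsLattice.fg (A := ℚ))

theorem span_lattice [CharZero L] [IsScalarTower ℚ L V] :
    Submodule.span L (c.lattice : Set V) = ⊤ := by
  refine eq_top_iff.2 fun x _ ↦ Submodule.span_le_restrictScalars ℚ L _ ?_
  have hspan : Submodule.span ℚ (c.lattice : Set V) = ⊤ :=
    Submodule.IsLattice.span_eq_top (M := c.lattice.restrictScalars ℤ)
  exact hspan ▸ Submodule.mem_top

theorem finrank_lattice : Module.finrank ℤ c.lattice = 8 := by
  have hrank : Module.finrank ℤ (c.lattice.restrictScalars ℤ) = Module.finrank ℚ V :=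
    congrArg Cardinal.toNat (Submodule.IsLattice.rank' ℚ _)
  rw [(c.equiv.trans doubledCoords).finrank_eq] at hrank
  exact hrank.trans (Module.finrank_fintype_fun_eq_card ℚ)

/-- The action of the icosians on `c.lattice` by left multiplication. -/
def leftMul : icosians →* Module.End (𝓞 L) c.lattice where
  toFun u :=
    { toFun := fun x ↦ ⟨c.equiv.symm (u * c.equiv x), by
        rw [mem_lattice, LinearEquiv.apply_symm_apply]
        exact mul_mem u.2 x.2⟩
      map_add' := fun x y ↦ Subtype.ext <| c.equiv.injective <| by simp [mul_add]
      map_smul' := fun a x ↦ Subtype.ext <| c.equiv.injective <| by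
        simp [equiv_integer_smul, mul_assoc] }
  map_one' := by
    ext x
    simp
  map_mul' u v := by
    ext x
    simp [mul_assoc]

theorem equiv_leftMul (u : icosians) (x : c.lattice) : c.equiv (c.leftMul u x) = u * c.equiv x :=
  c.equiv.apply_symm_apply _

theorem leftMul_injective : Function.Injective c.leftMul := fun u v huv ↦ by
  have h1 : c.equiv.symm 1 ∈ c.lattice := by simp [mem_lattice, one_mem]
  have h := congrArg c.equiv (congrArg Subtype.val (LinearMap.congr_fun huv ⟨_, h1⟩))
  simpa [equiv_leftMul] using h

theorem exists_isometry : ∃ σ : c.lattice ≃ₗ[𝓞 L] c.lattice, orderOf σ = 5 ∧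
    ∀ x, c.equiv (σ x) = icosianZeta * c.equiv x := by
  let ζ : icosians := ⟨icosianZeta, icosianZeta_mem⟩
  have hpow : c.leftMul ζ ^ 5 = 1 := by
    rw [← map_pow, ← map_one c.leftMul]
    exact congrArg _ (Subtype.ext icosianZeta_pow_five)
  have hne : c.leftMul ζ ≠ 1 := by
    rw [← map_one c.leftMul]
    exact fun h ↦ icosianZeta_ne_one (congrArg Subtype.val (c.leftMul_injective h))
  have : Fact (Nat.Prime 5) := ⟨Nat.prime_five⟩
  obtain ⟨σ, hσ, hσr⟩ := exists_linearEquiv_orderOf_eq_prime hpow hne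
  exact ⟨σ, hσ, fun x ↦ by rw [hσr, equiv_leftMul]⟩

end Lattice

variable (c : IcosianCoordinates L V)

/-- The form of type `E₈` on `V`. -/
def form : LinearMap.BilinForm ℚ V := icosianForm.comp c.equiv.toLinearMap c.equiv.toLinearMap

theorem form_apply (x y : V) : c.form x y = icosianForm (c.equiv x) (c.equiv y) := rfl

theorem form_isSymm : c.form.IsSymm where
  eq _ _ := icosianForm_isSymm.eq _ _

theorem form_self_pos {x : V} (hx : x ≠ 0) : 0 < c.form x x := by
  rw [form_apply, icosianForm_self]
  exact mul_pos two_pos (re_normSq_pos (by simpa using hx))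

theorem mem_lattice_iff_forall_form [Module (𝓞 L) V] [IsScalarTower (𝓞 L) L V] {x : V} :
    x ∈ c.lattice ↔ ∀ y ∈ c.lattice, ∃ n : ℤ, c.form x y = n := by
  rw [mem_lattice, mem_icosians_iff_forall_icosianForm]
  exact c.equiv.surjective.forall

theorem form_self_even [Module (𝓞 L) V] [IsScalarTower (𝓞 L) L V] {x : V} (hx : x ∈ c.lattice) :
    ∃ n : ℤ, c.form x x = 2 * n :=
  icosianForm_self_even hx

theorem form_smul_left {conj : L → L} (hconj : ∀ a, star (c.hom a) = c.hom (conj a)) (a : L)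
    (x y : V) : c.form (a • x) y = c.form x (conj a • y) := by
  rw [form_apply, form_apply, equiv_smul, equiv_smul, icosianForm_mul_right, hconj]

theorem form_smul_apply_apply {x y x' y' : V} (hx : c.equiv x' = icosianZeta * c.equiv x)
    (hy : c.equiv y' = icosianZeta * c.equiv y) (a : L) :
    c.form (a • x') y' = c.form (a • x) y := by
  rw [form_apply, form_apply, equiv_smul, equiv_smul, hx, hy, mul_assoc,
    icosianForm_mul_left normSq_icosianZeta]

end IcosianCoordinates

theorem exists_icosianCoordinates {L : Type*} [Field L] [NumberField L] {ℓ : ℕ} (hℓ : 0 < ℓ)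
    {α : L} (hα : α ^ 2 = -ℓ) (hdim : Module.finrank ℚ L = 2) :
    ∃ c : IcosianCoordinates L (Fin 4 → L), star (c.hom α) = -c.hom α := by
  obtain ⟨f, hre, hmem⟩ := exists_ringHom_mapsTo_icosians hℓ hα hdim
  have : FiniteDimensional ℚ ℍ[GoldenField] := doubledCoords.symm.finiteDimensional
  have hrank : Module.finrank ℚ L * 4 = Module.finrank ℚ ℍ[GoldenField] := by
    rw [hdim, doubledCoords.finrank_eq]
    simp
  obtain ⟨e, he⟩ := exists_linearEquiv_forall_smul_eq_mul f hrank
  exact ⟨⟨f, e, he, hmem⟩, star_eq_neg.2 hre⟩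

end IcosianCoordinates

theorem E8_hermitian_structure_general {L : Type*} [Field L] [NumberField L] {ℓ : ℕ} (hℓ : 0 < ℓ)
    {α : L} (hα : α ^ 2 = -ℓ) (hdim : Module.finrank ℚ L = 2)
    {conj : L ≃ₐ[ℚ] L} (hconj : conj α = -α) :
    ∃ (h : (Fin 4 → L) → (Fin 4 → L) → L)
      (Λ : Submodule (𝓞 L) (Fin 4 → L)) (σ : Λ ≃ₗ[𝓞 L] Λ),
      (∀ x y z, h (x + y) z = h x z + h y z) ∧
      (∀ (a : L) (x y), h (a • x) y = a * h x y) ∧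
      (∀ x y, h y x = conj (h x y)) ∧
      (∀ x, x ≠ 0 → ∃ r : ℚ, 0 < r ∧ h x x = algebraMap ℚ L r) ∧
      Λ.FG ∧ Submodule.span L (Λ : Set (Fin 4 → L)) = ⊤ ∧
      orderOf σ = 5 ∧
      (∀ x y : Λ, h (σ x) (σ y) = h x y) ∧
      (∀ x ∈ Λ, ∃ n : ℤ, Algebra.trace ℚ L (h x x) = 2 * (n : ℚ)) ∧
      (∀ x ∈ Λ, x ≠ 0 → 0 < Algebra.trace ℚ L (h x x)) ∧
      ({v | ∀ x ∈ Λ, ∃ n : ℤ, Algebra.trace ℚ L (h v x) = (n : ℚ)} =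
        {v : Fin 4 → L | v ∈ Λ}) ∧
      Module.finrank ℤ Λ = 8 := by
  obtain ⟨c, hstar⟩ := exists_icosianCoordinates hℓ hα hdim
  have hα' : α ^ 2 = algebraMap ℚ L (-ℓ) := by simpa using hα
  have hadj : ∀ (a : L) x y, c.form (a • x) y = c.form x (conj a • y) := c.form_smul_left
    (star_ringHom_apply (sq_ne_neg_natCast hℓ) hdim hα' hconj hstar)
  obtain ⟨σ, hσ, hσζ⟩ := c.exists_isometry
  refine ⟨traceLift c.form, c.lattice, σ, traceLift_add_left _, traceLift_smul_left _,
    traceLift_swap c.form_isSymm conj hadj, fun x hx ↦ ?_, c.lattice_fg, c.span_lattice, hσ,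
    fun x y ↦ traceLift_congr (c.form_smul_apply_apply (hσζ x) (hσζ y)), ?_, ?_, ?_,
    c.finrank_lattice⟩
  · exact exists_pos_traceLift_self_eq (sq_ne_neg_natCast hℓ) hdim hα' hconj
      c.form_isSymm hadj (c.form_self_pos hx)
  · simpa only [trace_traceLift] using fun x ↦ c.form_self_even
  · simpa only [trace_traceLift] using fun x _ ↦ c.form_self_pos
  · simp only [trace_traceLift, ← c.mem_lattice_iff_forall_form]

/-- If `5 ∤ ℓ`, the root lattice `E₈` has a Hermitian structure over
`O_L` admitting an automorphism of order `5`: there is an `O_L`-lattice `Λ_h` (inside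
`V = L⁴`) with positive definite `L`-Hermitian form `h` and an `O_L`-linear isometry of
order `5`, such that the `ℤ`-bilinear form `Tr_{L/ℚ}(h(x,y))` makes `Λ_h` a positive
definite even unimodular `ℤ`-lattice of rank `8`. -/
theorem E8_hermitian_structure (ℓ : ℕ) (hℓpos : 0 < ℓ) (hℓ5 : ¬ (5 ∣ ℓ))
    (hfund : (ℓ % 4 = 3 ∧ Squarefree ℓ) ∨
      ∃ m : ℕ, ℓ = 4 * m ∧ Squarefree m ∧ (m % 4 = 1 ∨ m % 4 = 2))
    (L : Type) [Field L] [NumberField L]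
    (α : L) (hα : α ^ 2 = -(ℓ : L)) (hdim : Module.finrank ℚ L = 2)
    (conj : L ≃ₐ[ℚ] L) (hconjα : conj α = -α) :
    ∃ (h : (Fin 4 → L) → (Fin 4 → L) → L)
      (Λ : Submodule (𝓞 L) (Fin 4 → L)) (σ : Λ ≃ₗ[𝓞 L] Λ),
      (∀ x y z, h (x + y) z = h x z + h y z) ∧
      (∀ (a : L) (x y), h (a • x) y = a * h x y) ∧
      (∀ x y, h y x = conj (h x y)) ∧
      (∀ x, x ≠ 0 → ∃ r : ℚ, 0 < r ∧ h x x = algebraMap ℚ L r) ∧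
      Λ.FG ∧ Submodule.span L (Λ : Set (Fin 4 → L)) = ⊤ ∧
      orderOf σ = 5 ∧
      (∀ x y : Λ, h (σ x) (σ y) = h x y) ∧
      -- the trace form is even, positive definite, unimodular, of rank 8:
      (∀ x ∈ Λ, ∃ n : ℤ, Algebra.trace ℚ L (h x x) = 2 * (n : ℚ)) ∧
      (∀ x ∈ Λ, x ≠ 0 → 0 < Algebra.trace ℚ L (h x x)) ∧
      ({v | ∀ x ∈ Λ, ∃ n : ℤ, Algebra.trace ℚ L (h v x) = (n : ℚ)} =
        {v : Fin 4 → L | v ∈ Λ}) ∧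
      Module.finrank ℤ Λ = 8 :=
  E8_hermitian_structure_general hℓpos hα hdim hconjα
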